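/- Let N be a monotonic max-sum GNN with L layers over a finite colour set Col, let R be a finite set of relations, let f : R × ℝ^{δ_L} × ℝ^{δ_L} → ℝ be such that f(R, ·, ·) is monotonically increasing for each R ∈ R, and let t_f ∈ ℝ be a threshold. Let G and G' be finite Col-edge-coloured graphs with vertex sets V and V', decidable edge relations E^c and E'^c, and initial labels λ_0 : V → ℝ^{δ_0} and λ'_0 : V' → ℝ^{δ_0} whose entries are all non-negative. Suppose ι : V → V' is injective, (u, v) ∈ E^c implies (ι u, ι v) ∈ E'^c for all c, u, v, and λ_0(v)[j] ≤ λ'_0(ι v)[j] for all v, j. Then for all u, v ∈ V and every R ∈ R: if f(R, λ_L(u), λ_L(v)) ≥ t_f then f(R, λ'_L(ι u), λ'_L(ι v)) ≥ t_f. (Hence the set of facts predicted by (N, f) on G is contained, via ι, in the set of facts predicted on G'; this is the monotonicity of the induced dataset transformation T_{N,f} under dataset inclusion.) -/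

import Mathlib

/-- Sum of the `min k |S|` largest elements of the multiset `S`. -/
noncomputable def maxKSum (k : ℕ) (S : Multiset ℝ) : ℝ :=
  ((S.sort (· ≤ ·)).reverse.take k).sum

/-- `max-k-sum` where the aggregation parameter `k` may be a natural number or `∞`;
`max-∞-sum` sums all elements. -/
noncomputable def maxKSumE (k : ℕ∞) (S : Multiset ℝ) : ℝ :=
  maxKSum (min k (Multiset.card S : ℕ∞)).toNat S

/-- A max-sum GNN with `L` layers over a colour set `Col` and dimensions `δ 0, …, δ L`:
matrices `A ℓ`, `B ℓ c ∈ ℝ^{δ(ℓ+1) × δ ℓ}`, bias vectors `bias ℓ ∈ ℝ^{δ(ℓ+1)}`,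
activation functions `act ℓ : ℝ → ℝ` and aggregation parameters `agg ℓ ∈ ℕ ∪ {∞}`. -/
structure MaxSumGNN (Col : Type) (L : ℕ) (δ : ℕ → ℕ) where
  A : ∀ ℓ : Fin L, Matrix (Fin (δ (ℓ.1 + 1))) (Fin (δ ℓ.1)) ℝ
  B : ∀ ℓ : Fin L, Col → Matrix (Fin (δ (ℓ.1 + 1))) (Fin (δ ℓ.1)) ℝ
  bias : ∀ ℓ : Fin L, Fin (δ (ℓ.1 + 1)) → ℝ
  act : Fin L → ℝ → ℝ
  agg : Fin L → ℕ∞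

/-- A max-sum GNN is monotonic if all entries of all matrices `A ℓ`, `B ℓ c` are
non-negative and every activation function is monotonically increasing with
non-negative range. -/
def MaxSumGNN.Monotonic {Col : Type} {L : ℕ} {δ : ℕ → ℕ} (N : MaxSumGNN Col L δ) : Prop :=
  (∀ ℓ i j, 0 ≤ N.A ℓ i j) ∧ (∀ ℓ c i j, 0 ≤ N.B ℓ c i j) ∧
  (∀ ℓ, Monotone (N.act ℓ) ∧ ∀ x, 0 ≤ N.act ℓ x)

/-- The vertex labels `λ_ℓ(v)` computed by a max-sum GNN applied to a finite
`Col`-edge-coloured graph with edge relations `E c` and initial labels `lam0`: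
`λ_ℓ(v) = σ_ℓ(b_ℓ + A_ℓ λ_{ℓ-1}(v) + Σ_c B_ℓ^c a_ℓ^c(v))` where the `j`-th
component of `a_ℓ^c(v)` is the `max-k_ℓ-sum` of `⦃λ_{ℓ-1}(u)[j] : (v,u) ∈ E^c⦄`. -/
noncomputable def MaxSumGNN.label {Col : Type} [Fintype Col] {L : ℕ} {δ : ℕ → ℕ}
    (N : MaxSumGNN Col L δ) {V : Type} [Fintype V]
    (E : Col → V → V → Prop) [∀ c u v, Decidable (E c u v)]
    (lam0 : V → Fin (δ 0) → ℝ) :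
    (ℓ : ℕ) → ℓ ≤ L → V → Fin (δ ℓ) → ℝ
  | 0, _, v => lam0 v
  | (ℓ + 1), hℓ, v => fun i =>
      N.act ⟨ℓ, hℓ⟩ (N.bias ⟨ℓ, hℓ⟩ i
        + (N.A ⟨ℓ, hℓ⟩).mulVec (N.label E lam0 ℓ (Nat.le_of_succ_le hℓ) v) i
        + ∑ c : Col, (N.B ⟨ℓ, hℓ⟩ c).mulVec
            (fun j => maxKSumE (N.agg ⟨ℓ, hℓ⟩)
              ((Finset.univ.filter (fun u => E c v u)).val.map
                (fun u => N.label E lam0 ℓ (Nat.le_of_succ_le hℓ) u j))) i)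

theorem sum_le_take_aux (l : List ℝ) : ∀ (k : ℕ) (T : Multiset ℝ), l.Pairwise (fun a b => b ≤ a) →
    (∀ a ∈ l, 0 ≤ a) → T ≤ (l : Multiset ℝ) → Multiset.card T ≤ k → T.sum ≤ (l.take k).sum := by
  induction l with
  | nil =>
    intro k T _ _ hT _
    have : T = 0 := by simpa using hT
    simp [this]
  | cons a l ih =>
    intro k T hs hn hT hk
    rw [List.pairwise_cons] at hs
    have hn' : ∀ b ∈ l, 0 ≤ b := fun b hb => hn b (List.mem_cons_of_mem _ hb)
    rw [← Multiset.cons_coe] at hT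
    cases k with
    | zero =>
      have : T = 0 := by simpa using hk
      simp [this]
    | succ k =>
      rw [List.take_succ_cons, List.sum_cons]
      by_cases ha : a ∈ T
      · obtain ⟨T', rfl⟩ := Multiset.exists_cons_of_mem ha
        rw [Multiset.cons_le_cons_iff] at hT
        rw [Multiset.card_cons] at hk
        rw [Multiset.sum_cons]
        have := ih k T' hs.2 hn' hT (by omega)
        linarith
      · have hT' : T ≤ (l : Multiset ℝ) := (Multiset.le_cons_of_notMem ha).1 hT
        rcases T.empty_or_exists_mem with rfl | ⟨b, hb⟩
        · have := ih k 0 hs.2 hn' (by simp) (by simp)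
          have := hn a (by simp)
          simp only [Multiset.sum_zero] at *
          linarith
        · have hbl : b ∈ l := by simpa using Multiset.mem_of_le hT' hb
          obtain ⟨T', rfl⟩ := Multiset.exists_cons_of_mem hb
          rw [Multiset.card_cons] at hk
          rw [Multiset.sum_cons]
          have := ih k T' hs.2 hn' ((Multiset.le_cons_self _ _).trans hT') (by omega)
          have := hs.1 b hbl
          linarith

theorem sum_le_maxKSum (k : ℕ) (S T : Multiset ℝ) (hn : ∀ a ∈ S, 0 ≤ a) (hT : T ≤ S)
    (hk : Multiset.card T ≤ k) : T.sum ≤ maxKSum k S := by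
  unfold maxKSum
  apply sum_le_take_aux _ k T _ _ _ hk
  · rw [List.pairwise_reverse]
    exact Multiset.pairwise_sort _ _
  · intro a ha
    exact hn a (by simpa using ha)
  · rw [Multiset.coe_reverse, Multiset.sort_eq]
    exact hT

theorem exists_maxKSum {α : Type} (k : ℕ) (s : Multiset α) (f : α → ℝ) :
    ∃ t ≤ s, Multiset.card t ≤ k ∧ (t.map f).sum = maxKSum k (s.map f) := by
  have h : (((s.map f).sort (· ≤ ·)).reverse.take k : Multiset ℝ) ≤ s.map f := by
    conv_rhs => rw [← Multiset.sort_eq (s.map f) (· ≤ ·), ← Multiset.coe_reverse]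
    exact (List.take_sublist _ _).subperm
  have hc : Multiset.card (((s.map f).sort (· ≤ ·)).reverse.take k : Multiset ℝ) ≤ k := by
    simp
  have hs : maxKSum k (s.map f) = (((s.map f).sort (· ≤ ·)).reverse.take k : Multiset ℝ).sum := by
    simp [maxKSum]
  rw [hs]
  generalize (((s.map f).sort (· ≤ ·)).reverse.take k : Multiset ℝ) = T at *
  induction s using Quotient.inductionOn with | _ l =>
  induction T using Quotient.inductionOn with | _ m =>
  obtain ⟨m', hm', hsub⟩ := h
  obtain ⟨l', hl', rfl⟩ := List.sublist_map_iff.1 hsub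
  have e : (Quotient.mk _ m : Multiset ℝ) = ((l' : Multiset α).map f) := by
    exact (Quotient.sound hm').symm
  refine ⟨(l' : Multiset α), hl'.subperm, ?_, ?_⟩
  · rw [e] at hc
    simpa using hc
  · rw [e]

theorem maxKSumE_mono {V V' : Type} (k : ℕ∞) (s : Finset V) (s' : Finset V') (ι : V → V')
    (hι : Function.Injective ι) (hs : ∀ v ∈ s, ι v ∈ s') (f : V → ℝ) (f' : V' → ℝ)
    (hf' : ∀ v, 0 ≤ f' v) (hff : ∀ v, f v ≤ f' (ι v)) :
    maxKSumE k (s.val.map f) ≤ maxKSumE k (s'.val.map f') := by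
  unfold maxKSumE
  have hsub : s.val.map ι ≤ s'.val := by
    rw [Multiset.le_iff_subset (s.nodup.map hι)]
    intro x hx
    obtain ⟨v, hv, rfl⟩ := Multiset.mem_map.1 hx
    exact hs v hv
  have hcard : Multiset.card s.val ≤ Multiset.card s'.val := by
    simpa using Multiset.card_le_card hsub
  obtain ⟨t, ht, htk, he⟩ := exists_maxKSum (min k (Multiset.card (s.val.map f) : ℕ∞)).toNat s.val f
  rw [← he]
  calc (t.map f).sum ≤ (t.map (fun v => f' (ι v))).sum :=
        Multiset.sum_map_le_sum_map _ _ (fun v _ => hff v)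
    _ = ((t.map ι).map f').sum := by rw [Multiset.map_map]; rfl
    _ ≤ _ := by
      apply sum_le_maxKSum
      · intro a ha
        obtain ⟨v, _, rfl⟩ := Multiset.mem_map.1 ha
        exact hf' v
      · exact Multiset.map_le_map ((Multiset.map_le_map ht).trans hsub)
      · rw [Multiset.card_map, Multiset.card_map]
        refine htk.trans (ENat.toNat_le_toNat ?_ ?_)
        · rw [Multiset.card_map, Multiset.card_map]
          exact min_le_min_left _ (by exact_mod_cast hcard)
        · exact ne_top_of_le_ne_top (ENat.natCast_ne_top _) (min_le_right _ _)

theorem label_nonneg {Col : Type} [Fintype Col] {L : ℕ} {δ : ℕ → ℕ}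
    (N : MaxSumGNN Col L δ) (hN : N.Monotonic) {V : Type} [Fintype V]
    (E : Col → V → V → Prop) [∀ c u v, Decidable (E c u v)]
    (lam0 : V → Fin (δ 0) → ℝ) (hlam0 : ∀ v j, 0 ≤ lam0 v j) (ℓ : ℕ) (h : ℓ ≤ L) (v : V)
    (i : Fin (δ ℓ)) : 0 ≤ N.label E lam0 ℓ h v i := by
  cases ℓ with
  | zero => simpa [MaxSumGNN.label] using hlam0 v i
  | succ ℓ =>
    rw [MaxSumGNN.label]
    exact (hN.2.2 _).2 _

theorem mulVec_mono_aux {m n : ℕ} (A : Matrix (Fin m) (Fin n) ℝ) (hA : ∀ i j, 0 ≤ A i j)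
    (x y : Fin n → ℝ) (h : ∀ j, x j ≤ y j) (i : Fin m) : A.mulVec x i ≤ A.mulVec y i := by
  simp only [Matrix.mulVec, dotProduct]
  exact Finset.sum_le_sum fun j _ => mul_le_mul_of_nonneg_left (h j) (hA i j)

/-- a monotonic max-sum GNN combined with a scoring function that
is monotonically increasing for each relation yields a monotone dataset
transformation: under an injective homomorphism of input graphs, every fact
scored above the threshold on `G` is also scored above the threshold on `G'`. -/
theorem maxSumGNN_scoring_monotone
    {Col : Type} [Fintype Col] {L : ℕ} {δ : ℕ → ℕ}
    (N : MaxSumGNN Col L δ) (hN : N.Monotonic)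
    (R : Type) [Fintype R]
    (f : R → (Fin (δ L) → ℝ) → (Fin (δ L) → ℝ) → ℝ)
    (hf : ∀ (r : R) (h h' t t' : Fin (δ L) → ℝ),
      (∀ i, 0 ≤ h i ∧ h i ≤ h' i) → (∀ i, 0 ≤ t i ∧ t i ≤ t' i) →
      f r h t ≤ f r h' t')
    (tf : ℝ)
    {V V' : Type} [Fintype V] [Fintype V']
    (E : Col → V → V → Prop) [∀ c u v, Decidable (E c u v)]
    (E' : Col → V' → V' → Prop) [∀ c u v, Decidable (E' c u v)]
    (lam0 : V → Fin (δ 0) → ℝ) (lam0' : V' → Fin (δ 0) → ℝ)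
    (hlam0 : ∀ v j, 0 ≤ lam0 v j) (hlam0' : ∀ v j, 0 ≤ lam0' v j)
    (ι : V → V') (hι : Function.Injective ι)
    (hE : ∀ c u v, E c u v → E' c (ι u) (ι v))
    (hle : ∀ v j, lam0 v j ≤ lam0' (ι v) j) :
    ∀ (u v : V) (r : R),
      tf ≤ f r (N.label E lam0 L le_rfl u) (N.label E lam0 L le_rfl v) →
      tf ≤ f r (N.label E' lam0' L le_rfl (ι u)) (N.label E' lam0' L le_rfl (ι v)) := by
  have key : ∀ (ℓ : ℕ) (h : ℓ ≤ L) (v : V) (i : Fin (δ ℓ)),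
      N.label E lam0 ℓ h v i ≤ N.label E' lam0' ℓ h (ι v) i := by
    intro ℓ
    induction ℓ with
    | zero => intro h v i; simpa [MaxSumGNN.label] using hle v i
    | succ ℓ ih =>
      intro h v i
      rw [MaxSumGNN.label, MaxSumGNN.label]
      apply (hN.2.2 _).1
      refine add_le_add (add_le_add le_rfl ?_) (Finset.sum_le_sum fun c _ => ?_)
      · exact mulVec_mono_aux _ (hN.1 ⟨ℓ, h⟩) _ _ (ih _ v) i
      · refine mulVec_mono_aux _ (hN.2.1 ⟨ℓ, h⟩ c) _ _ (fun j => ?_) i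
        apply maxKSumE_mono _ _ _ ι hι
        · intro w hw
          simp only [Finset.mem_filter, Finset.mem_univ, true_and] at hw ⊢
          exact hE c v w hw
        · exact fun w => label_nonneg N hN E' lam0' hlam0' _ _ w j
        · exact fun w => ih _ w j
  intro u v r hr
  refine hr.trans (hf r _ _ _ _ (fun i => ⟨?_, key _ _ _ _⟩) (fun i => ⟨?_, key _ _ _ _⟩))
  · exact label_nonneg N hN E lam0 hlam0 _ _ u i
  · exact label_nonneg N hN E lam0 hlam0 _ _ v i
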